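/- Let d ≤ 2, q > 1/2, α ∈ ℝ, β ∈ ℝ with |β| ≤ √(2q+1)/q, and M > 0. There exist constants C < ∞ and γ < ∞ (depending only on d, q, α, β, M) such that for all sufficiently small ε > 0, all t > 0 and all L > 0 with L' := L − C(1+t) log(1/ε) > 0, the following holds: if g : ℝ^d × [0,t] → ℂ is bounded and continuous, and u, v are bounded classical solutions on ℝ^d × [0,t] of the Ginzburg–Landau equation ∂_t w = (1+iα)Δw + w − (1+iβ)|w|^{2q}w + g with |u(x,s)| ≤ M and |v(x,s)| ≤ M for all (x,s), and if sup_{x ∈ Q_L} |u(x,0) − v(x,0)| ≤ ε, then sup_{x ∈ Q_{L'}} |u(x,t) − v(x,t)| ≤ C e^{γ t} ε. -/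

import Mathlib

open Complex MeasureTheory

/-- The Laplacian `Δw(x) = Σ_j ∂²_j w(x)` of `w : ℝ^d → ℂ`. -/
noncomputable def lap (d : ℕ) (w : EuclideanSpace ℝ (Fin d) → ℂ)
    (x : EuclideanSpace ℝ (Fin d)) : ℂ :=
  ∑ j : Fin d, iteratedFDeriv ℝ 2 w x
    ![EuclideanSpace.single j (1 : ℝ), EuclideanSpace.single j (1 : ℝ)]

/-- `w` is a bounded classical solution on `ℝ^d × S` (for a time set `S ⊆ ℝ`) of the
Ginzburg–Landau equation `∂_t w = (1+iα)Δw + w − (1+iβ)|w|^{2q}w + g`. -/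
def IsGLSolution (d : ℕ) (q α β : ℝ) (S : Set ℝ)
    (g w : EuclideanSpace ℝ (Fin d) → ℝ → ℂ) : Prop :=
  ContinuousOn (fun p : EuclideanSpace ℝ (Fin d) × ℝ => w p.1 p.2) (Set.univ ×ˢ S) ∧
  (∀ t ∈ S, ContDiff ℝ 2 (fun x => w x t)) ∧
  (∃ B : ℝ, ∀ t ∈ S, ∀ x, ‖w x t‖ ≤ B ∧ ‖fderiv ℝ (fun x' => w x' t) x‖ ≤ B ∧
      ‖iteratedFDeriv ℝ 2 (fun x' => w x' t) x‖ ≤ B) ∧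
  (∀ x, ∀ t ∈ S, HasDerivWithinAt (fun s => w x s)
      ((1 + Complex.I * (α : ℂ)) * lap d (fun x' => w x' t) x + w x t -
        (1 + Complex.I * (β : ℂ)) * ((‖w x t‖ ^ (2 * q) : ℝ) : ℂ) * w x t + g x t) S t)

/-- Membership in the cube `Q_ℓ = [−ℓ/2, ℓ/2]^d`. -/
def inCube (d : ℕ) (ℓ : ℝ) (x : EuclideanSpace ℝ (Fin d)) : Prop :=
  ∀ j : Fin d, |x j| ≤ ℓ / 2

/-!
The difference `w = u - v` solves `∂_t w = κ Δ w + F` with `κ = 1 + iα` and `‖F‖ ≤ K ‖w‖`, because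
the reaction term is Lipschitz on the disc of radius `M`. Since `Re κ > 0`, the complex heat kernel
is a Gaussian, and its `L¹` norm against the weight `e^{‖z‖}` grows at most exponentially in time.
By Duhamel's formula, the supremum of `‖w y s‖ e^{-γ s - ‖y - x‖}` is therefore bounded by its
initial value up to a term which, for large `γ`, is half of that same supremum and can be absorbed.
The weight localises the estimate: it pays for the crude bound `2M` on the initial difference
outside `Q_L` as soon as `x` lies `log (1/ε)` deep inside `Q_L`.
-/

open InnerProductSpace Laplacian Module Filter Topology

lemma iteratedFDeriv_two_eq_fderiv_fderiv {E F : Type*} [NormedAddCommGroup E] [NormedSpace ℝ E]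
    [NormedAddCommGroup F] [NormedSpace ℝ F] {f : E → F} (hf : ContDiff ℝ 2 f) (x v w : E) :
    iteratedFDeriv ℝ 2 f x ![v, w] = fderiv ℝ (fun y ↦ fderiv ℝ f y w) x v := by
  have hdiff : DifferentiableAt ℝ (fderiv ℝ f) x :=
    (hf.fderiv_right (m := 1) (by norm_num)).differentiable (by norm_num) x
  rw [iteratedFDeriv_two_apply, fderiv_clm_apply hdiff (by fun_prop)]
  simp

lemma one_add_sq_le_two_mul_exp {x : ℝ} (hx : 0 ≤ x) : 1 + x ^ 2 ≤ 2 * Real.exp x := by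
  nlinarith [Real.quadratic_le_exp_of_nonneg hx]

section ComplexGaussian

variable {V : Type*} [NormedAddCommGroup V] [InnerProductSpace ℝ V]

/-- The Gaussian `z ↦ (b / π)^(n/2) exp (-b ‖z‖²)` of complex width `b` on an `n`-dimensional
inner product space, with total mass `1` when `0 < b.re`. -/
noncomputable def complexGaussian (b : ℂ) (z : V) : ℂ :=
  (b / Real.pi) ^ ((finrank ℝ V / 2 : ℝ) : ℂ) * cexp (-b * (‖z‖ : ℂ) ^ 2)

lemma contDiff_complexGaussian (b : ℂ) : ContDiff ℝ 2 (complexGaussian b : V → ℂ) := by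
  have : ContDiff ℝ 2 fun z : V ↦ ((‖z‖ ^ 2 : ℝ) : ℂ) :=
    ofRealCLM.contDiff.comp (contDiff_norm_sq ℝ)
  simp only [ofReal_pow] at this
  unfold complexGaussian
  fun_prop

lemma norm_complexGaussian (b : ℂ) (z : V) :
    ‖complexGaussian b z‖
      = (‖b‖ / Real.pi) ^ (finrank ℝ V / 2 : ℝ) * Real.exp (-b.re * ‖z‖ ^ 2) := by
  have hre : (-b * (‖z‖ : ℂ) ^ 2).re = -b.re * ‖z‖ ^ 2 := by
    rw [← ofReal_pow, re_mul_ofReal, neg_re]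
  rw [complexGaussian, norm_mul, norm_cpow_real, norm_exp, hre, norm_div, norm_real,
    Real.norm_of_nonneg Real.pi_pos.le]

lemma norm_complexGaussian_mul_exp_le {b : ℂ} (hb : 0 < b.re) (a : ℝ) (z : V) :
    ‖complexGaussian b z‖ * Real.exp (a * ‖z‖)
      ≤ (‖b‖ / Real.pi) ^ (finrank ℝ V / 2 : ℝ) * Real.exp (a ^ 2 / (2 * b.re))
        * Real.exp (-(b.re / 2) * ‖z‖ ^ 2) := by
  have hsquare : a ^ 2 / (2 * b.re) + -(b.re / 2) * ‖z‖ ^ 2 - (-b.re * ‖z‖ ^ 2 + a * ‖z‖)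
      = (a - b.re * ‖z‖) ^ 2 / (2 * b.re) := by
    field_simp
    ring
  have hexponent : -b.re * ‖z‖ ^ 2 + a * ‖z‖ ≤ a ^ 2 / (2 * b.re) + -(b.re / 2) * ‖z‖ ^ 2 :=
    sub_nonneg.mp (hsquare ▸ by positivity)
  rw [norm_complexGaussian, mul_assoc, mul_assoc, ← Real.exp_add, ← Real.exp_add]
  gcongr

lemma hasDerivAt_complexGaussian {b : ℂ} (hb : 0 < b.re) (z : V) :
    HasDerivAt (fun b' ↦ complexGaussian b' z)
      ((finrank ℝ V / (2 * b) - (‖z‖ : ℂ) ^ 2) * complexGaussian b z) b := by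
  have hb0 : b ≠ 0 := by rintro rfl; simp at hb
  have hπ : (Real.pi : ℂ) ≠ 0 := mod_cast Real.pi_ne_zero
  have hslit : b / Real.pi ∈ slitPlane :=
    Or.inl (by rw [div_ofReal_re]; exact div_pos hb Real.pi_pos)
  have hpow := ((hasDerivAt_id b).div_const (Real.pi : ℂ)).cpow_const
    (c := ((finrank ℝ V / 2 : ℝ) : ℂ)) hslit
  have hexp := (((hasDerivAt_id b).neg).mul_const ((‖z‖ : ℂ) ^ 2)).cexp
  refine (hpow.mul hexp).congr_deriv ?_
  simp only [id_eq, complexGaussian, cpow_sub _ _ (div_ne_zero hb0 hπ), cpow_one, ofReal_div,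
    ofReal_natCast, ofReal_ofNat, Pi.neg_apply]
  field_simp
  ring

lemma hasFDerivAt_complexGaussian (b : ℂ) (z : V) :
    HasFDerivAt (complexGaussian b)
      (ofRealCLM.smulRight (-2 * b * complexGaussian b z) ∘L innerSL ℝ z) z := by
  have hsq : HasFDerivAt (fun y : V ↦ (‖y‖ : ℂ) ^ 2) (ofRealCLM ∘L (2 • innerSL ℝ z)) z := by
    simpa only [Function.comp_def, ofRealCLM_apply, ofReal_pow] using
      ofRealCLM.hasFDerivAt.comp z (hasStrictFDerivAt_norm_sq z).hasFDerivAt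
  refine (((hsq.const_mul (-b)).cexp).const_mul _).congr_fderiv ?_
  ext v
  simp only [complexGaussian, ContinuousLinearMap.comp_smul, smul_apply,
    ContinuousLinearMap.comp_apply, ContinuousLinearMap.smulRight_apply, coe_innerSL_apply,
    ofRealCLM_apply, nsmul_eq_mul, smul_eq_mul, Nat.cast_ofNat]
  ring

lemma fderiv_complexGaussian (b : ℂ) (z v : V) :
    fderiv ℝ (complexGaussian b) z v = -2 * b * ⟪z, v⟫_ℝ * complexGaussian b z := by
  rw [(hasFDerivAt_complexGaussian b z).fderiv]
  simp only [ContinuousLinearMap.comp_apply, ContinuousLinearMap.smulRight_apply,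
    coe_innerSL_apply, ofRealCLM_apply, smul_eq_mul]
  ring

lemma iteratedFDeriv_two_complexGaussian (b : ℂ) (z v : V) :
    iteratedFDeriv ℝ 2 (complexGaussian b) z ![v, v]
      = (4 * b ^ 2 * (⟪z, v⟫_ℝ : ℂ) ^ 2 - 2 * b * (‖v‖ : ℂ) ^ 2) * complexGaussian b z := by
  have hinner : HasFDerivAt (fun y : V ↦ (⟪y, v⟫_ℝ : ℂ)) (ofRealCLM ∘L innerSL ℝ v) z := by
    simp only [real_inner_comm v]
    exact (ofRealCLM ∘L innerSL ℝ v).hasFDerivAt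
  rw [iteratedFDeriv_two_eq_fderiv_fderiv (contDiff_complexGaussian b)]
  simp only [fderiv_complexGaussian]
  rw [((hinner.const_mul (-2 * b)).fun_mul (hasFDerivAt_complexGaussian b z)).fderiv]
  simp only [add_apply, smul_apply, ContinuousLinearMap.comp_apply, coe_innerSL_apply,
    ContinuousLinearMap.smulRight_apply, ofRealCLM_apply, smul_eq_mul, real_inner_self_eq_norm_sq,
    ofReal_pow]
  ring

lemma laplacian_complexGaussian [FiniteDimensional ℝ V] (b : ℂ) (z : V) :
    Δ (complexGaussian b : V → ℂ) z
      = (4 * b ^ 2 * (‖z‖ : ℂ) ^ 2 - 2 * b * finrank ℝ V) * complexGaussian b z := by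
  have hsum : ∑ i, (⟪z, stdOrthonormalBasis ℝ V i⟫_ℝ : ℂ) ^ 2 = (‖z‖ : ℂ) ^ 2 := by
    exact_mod_cast (stdOrthonormalBasis ℝ V).sum_sq_inner_left z
  simp only [laplacian_eq_iteratedFDeriv_stdOrthonormalBasis, iteratedFDeriv_two_complexGaussian,
    OrthonormalBasis.norm_eq_one, ← Finset.sum_mul, Finset.sum_sub_distrib, ← Finset.mul_sum,
    hsum, Finset.sum_const, Finset.card_univ, Fintype.card_fin, ofReal_one, one_pow, nsmul_eq_mul]
  ring

lemma norm_fderiv_complexGaussian_le (b : ℂ) (z v : V) :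
    ‖fderiv ℝ (complexGaussian b) z v‖
      ≤ 2 * ‖b‖ * ‖v‖ * (‖complexGaussian b z‖ * Real.exp ‖z‖) := by
  rw [fderiv_complexGaussian]
  simp only [norm_mul, norm_neg, norm_real, RCLike.norm_ofNat]
  calc 2 * ‖b‖ * ‖⟪z, v⟫_ℝ‖ * ‖complexGaussian b z‖
      ≤ 2 * ‖b‖ * (Real.exp ‖z‖ * ‖v‖) * ‖complexGaussian b z‖ := by
        gcongr
        refine (norm_inner_le_norm z v).trans ?_
        gcongr
        exact (lt_add_one _).le.trans (Real.add_one_le_exp _)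
    _ = 2 * ‖b‖ * ‖v‖ * (‖complexGaussian b z‖ * Real.exp ‖z‖) := by ring

lemma norm_iteratedFDeriv_two_complexGaussian_le (b : ℂ) (z v : V) :
    ‖iteratedFDeriv ℝ 2 (complexGaussian b) z ![v, v]‖
      ≤ 2 * (4 * ‖b‖ ^ 2 + 2 * ‖b‖) * ‖v‖ ^ 2 * (‖complexGaussian b z‖ * Real.exp ‖z‖) := by
  have hinner : ‖⟪z, v⟫_ℝ‖ ^ 2 ≤ ‖z‖ ^ 2 * ‖v‖ ^ 2 :=
    (pow_le_pow_left₀ (norm_nonneg _) (norm_inner_le_norm z v) 2).trans_eq (mul_pow ..)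
  rw [iteratedFDeriv_two_complexGaussian, norm_mul]
  calc _ ≤ (4 * ‖b‖ ^ 2 * ‖⟪z, v⟫_ℝ‖ ^ 2 + 2 * ‖b‖ * ‖v‖ ^ 2) * ‖complexGaussian b z‖ := by
        gcongr
        exact (norm_sub_le _ _).trans_eq (by simp)
    _ ≤ (4 * ‖b‖ ^ 2 + 2 * ‖b‖) * (1 + ‖z‖ ^ 2) * ‖v‖ ^ 2 * ‖complexGaussian b z‖ := by
        gcongr
        nlinarith [mul_le_mul_of_nonneg_left hinner (sq_nonneg ‖b‖),
          mul_nonneg (norm_nonneg b) (mul_nonneg (sq_nonneg ‖z‖) (sq_nonneg ‖v‖)),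
          mul_nonneg (sq_nonneg ‖b‖) (sq_nonneg ‖v‖)]
    _ ≤ (4 * ‖b‖ ^ 2 + 2 * ‖b‖) * (2 * Real.exp ‖z‖) * ‖v‖ ^ 2 * ‖complexGaussian b z‖ := by
        gcongr
        exact one_add_sq_le_two_mul_exp (norm_nonneg z)
    _ = _ := by ring

lemma norm_laplacian_complexGaussian_le [FiniteDimensional ℝ V] (b : ℂ) (z : V) :
    ‖Δ (complexGaussian b : V → ℂ) z‖
      ≤ finrank ℝ V * (2 * (4 * ‖b‖ ^ 2 + 2 * ‖b‖))
        * (‖complexGaussian b z‖ * Real.exp ‖z‖) := by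
  rw [laplacian_eq_iteratedFDeriv_stdOrthonormalBasis]
  refine (norm_sum_le_of_le _ fun i _ ↦
    norm_iteratedFDeriv_two_complexGaussian_le b z (stdOrthonormalBasis ℝ V i)).trans_eq ?_
  simp only [OrthonormalBasis.norm_eq_one, one_pow, mul_one, Finset.sum_const, Finset.card_univ,
    Fintype.card_fin, nsmul_eq_mul]
  ring

variable [FiniteDimensional ℝ V] [MeasurableSpace V] [BorelSpace V]

lemma integrable_exp_neg_mul_norm_sq {b : ℝ} (hb : 0 < b) :
    Integrable fun z : V ↦ Real.exp (-b * ‖z‖ ^ 2) := by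
  simpa [← ofReal_pow, ← ofReal_neg, ← ofReal_mul, exp_ofReal_re] using
    (GaussianFourier.integrable_cexp_neg_mul_sq_norm_add
      (show 0 < (b : ℂ).re from hb) 0 (0 : V)).re

lemma integral_complexGaussian {b : ℂ} (hb : 0 < b.re) :
    ∫ z : V, complexGaussian b z = 1 := by
  have hb0 : b ≠ 0 := by rintro rfl; simp at hb
  have hπ : (Real.pi : ℂ) ≠ 0 := mod_cast Real.pi_ne_zero
  have hdiv : b / Real.pi ≠ 0 := div_ne_zero hb0 hπ
  have harg : (b / Real.pi).arg ≠ Real.pi := by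
    have : 0 < (b / Real.pi).re := by rw [div_ofReal_re]; positivity
    exact fun h ↦ (arg_eq_pi_iff.mp h).1.not_gt this
  simp only [complexGaussian, integral_const_mul, GaussianFourier.integral_cexp_neg_mul_sq_norm hb]
  rw [← inv_div b, ofReal_div, ofReal_natCast, ofReal_ofNat, inv_cpow _ _ harg]
  exact mul_inv_cancel₀ (by simp [cpow_eq_zero_iff, hdiv])

lemma integrable_norm_complexGaussian_mul_exp {b : ℂ} (hb : 0 < b.re) (a : ℝ) :
    Integrable fun z : V ↦ ‖complexGaussian b z‖ * Real.exp (a * ‖z‖) := by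
  have hcont := (contDiff_complexGaussian (V := V) b).continuous
  refine .mono' (g := fun z ↦ (‖b‖ / Real.pi) ^ (finrank ℝ V / 2 : ℝ)
      * Real.exp (a ^ 2 / (2 * b.re)) * Real.exp (-(b.re / 2) * ‖z‖ ^ 2))
    ((integrable_exp_neg_mul_norm_sq (half_pos hb)).const_mul _)
    (by fun_prop) (.of_forall fun z ↦ ?_)
  rw [Real.norm_of_nonneg (by positivity)]
  exact norm_complexGaussian_mul_exp_le hb a z

lemma integral_norm_complexGaussian_mul_exp_le {b : ℂ} (hb : 0 < b.re) (a : ℝ) :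
    ∫ z : V, ‖complexGaussian b z‖ * Real.exp (a * ‖z‖)
      ≤ (2 * ‖b‖ / b.re) ^ (finrank ℝ V / 2 : ℝ) * Real.exp (a ^ 2 / (2 * b.re)) := by
  have hgauss := integrable_exp_neg_mul_norm_sq (V := V) (half_pos hb)
  refine (integral_mono (integrable_norm_complexGaussian_mul_exp hb a) (hgauss.const_mul _)
    (norm_complexGaussian_mul_exp_le hb a)).trans_eq ?_
  rw [integral_const_mul, GaussianFourier.integral_rexp_neg_mul_sq_norm (half_pos hb),
    mul_right_comm, ← Real.mul_rpow (by positivity) (by positivity)]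
  congr 2
  field_simp

lemma integrable_complexGaussian {b : ℂ} (hb : 0 < b.re) :
    Integrable (complexGaussian b : V → ℂ) := by
  refine (integrable_norm_iff (contDiff_complexGaussian b).continuous.aestronglyMeasurable).mp ?_
  simpa using integrable_norm_complexGaussian_mul_exp (V := V) hb 0

lemma integrable_fderiv_complexGaussian {b : ℂ} (hb : 0 < b.re) (v : V) :
    Integrable fun z : V ↦ fderiv ℝ (complexGaussian b) z v := by
  have hdiff := contDiff_complexGaussian (V := V) b
  refine ((integrable_norm_complexGaussian_mul_exp hb 1).const_mul _).mono' ?_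
    (.of_forall fun z ↦ by simpa using norm_fderiv_complexGaussian_le b z v)
  exact ((hdiff.continuous_fderiv (by norm_num)).clm_apply continuous_const).aestronglyMeasurable

lemma integrable_iteratedFDeriv_two_complexGaussian {b : ℂ} (hb : 0 < b.re) (v : V) :
    Integrable fun z : V ↦ iteratedFDeriv ℝ 2 (complexGaussian b) z ![v, v] := by
  have hdiff := contDiff_complexGaussian (V := V) b
  refine ((integrable_norm_complexGaussian_mul_exp hb 1).const_mul _).mono' ?_
    (.of_forall fun z ↦ by simpa using norm_iteratedFDeriv_two_complexGaussian_le b z v)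
  have := hdiff.continuous_iteratedFDeriv (m := 2) le_rfl
  fun_prop

lemma integrable_laplacian_complexGaussian {b : ℂ} (hb : 0 < b.re) :
    Integrable (Δ (complexGaussian b : V → ℂ)) := by
  rw [laplacian_eq_iteratedFDeriv_stdOrthonormalBasis]
  exact integrable_finsetSum _ fun i _ ↦ integrable_iteratedFDeriv_two_complexGaussian hb _

lemma exists_integrable_bound_complexGaussian {m : ℝ} (hm : 0 < m) (Λ : ℝ) :
    ∃ bound : V → ℝ, Integrable bound ∧ ∀ b : ℂ, m ≤ b.re → ‖b‖ ≤ Λ → ∀ z : V,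
      ‖complexGaussian b z‖ ≤ bound z ∧ ‖Δ (complexGaussian b : V → ℂ) z‖ ≤ bound z := by
  set c := finrank ℝ V * (2 * (4 * Λ ^ 2 + 2 * Λ))
  set envelope : V → ℝ := fun z ↦ (Λ / Real.pi) ^ (finrank ℝ V / 2 : ℝ)
    * Real.exp (1 ^ 2 / (2 * m)) * Real.exp (-(m / 2) * ‖z‖ ^ 2)
  refine ⟨fun z ↦ (1 + c) * envelope z,
    ((integrable_exp_neg_mul_norm_sq (half_pos hm)).const_mul _).const_mul _,
    fun b hre hnorm z ↦ ?_⟩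
  have hΛ : 0 ≤ Λ := (norm_nonneg b).trans hnorm
  have henvelope : ‖complexGaussian b z‖ * Real.exp ‖z‖ ≤ envelope z := by
    have h := norm_complexGaussian_mul_exp_le (hm.trans_le hre) 1 z
    rw [one_mul] at h
    refine h.trans ?_
    simp only [envelope]
    gcongr
  have hc : 0 ≤ c := by positivity
  have henvelope0 : 0 ≤ envelope z := by positivity
  constructor
  · calc ‖complexGaussian b z‖ ≤ ‖complexGaussian b z‖ * Real.exp ‖z‖ :=
          le_mul_of_one_le_right (norm_nonneg _) (Real.one_le_exp (norm_nonneg z))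
      _ ≤ envelope z := henvelope
      _ ≤ (1 + c) * envelope z := le_mul_of_one_le_left henvelope0 (by linarith)
  · calc ‖Δ (complexGaussian b : V → ℂ) z‖
        ≤ finrank ℝ V * (2 * (4 * ‖b‖ ^ 2 + 2 * ‖b‖))
          * (‖complexGaussian b z‖ * Real.exp ‖z‖) := norm_laplacian_complexGaussian_le b z
      _ ≤ c * envelope z := by simp only [c]; gcongr
      _ ≤ (1 + c) * envelope z := by gcongr; linarith

end ComplexGaussian

section Laplacian

variable {V : Type*} [NormedAddCommGroup V] [InnerProductSpace ℝ V]

/-- `f` is a bounded `C²` function whose first two derivatives are bounded as well, all three by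
the constant `B`. -/
structure IsBoundedC2 (f : V → ℂ) (B : ℝ) : Prop where
  contDiff : ContDiff ℝ 2 f
  norm_le : ∀ x, ‖f x‖ ≤ B
  norm_fderiv_le : ∀ x, ‖fderiv ℝ f x‖ ≤ B
  norm_iteratedFDeriv_two_le : ∀ x, ‖iteratedFDeriv ℝ 2 f x‖ ≤ B

namespace IsBoundedC2

variable {f g : V → ℂ} {B B' : ℝ}

lemma sub (hf : IsBoundedC2 f B) (hg : IsBoundedC2 g B') :
    IsBoundedC2 (fun x ↦ f x - g x) (B + B') where
  contDiff := hf.contDiff.sub hg.contDiff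
  norm_le x := norm_sub_le_of_le (hf.norm_le x) (hg.norm_le x)
  norm_fderiv_le x := by
    rw [fderiv_fun_sub (hf.contDiff.differentiable (by norm_num) x)
      (hg.contDiff.differentiable (by norm_num) x)]
    exact norm_sub_le_of_le (hf.norm_fderiv_le x) (hg.norm_fderiv_le x)
  norm_iteratedFDeriv_two_le x := by
    rw [fun_iteratedFDeriv_sub_apply hf.contDiff.contDiffAt hg.contDiff.contDiffAt]
    exact norm_sub_le_of_le (hf.norm_iteratedFDeriv_two_le x) (hg.norm_iteratedFDeriv_two_le x)

lemma comp_add_left (hf : IsBoundedC2 f B) (y : V) : IsBoundedC2 (fun z ↦ f (y + z)) B where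
  contDiff := hf.contDiff.comp (by fun_prop)
  norm_le z := hf.norm_le (y + z)
  norm_fderiv_le z := by
    rw [fderiv_comp_add_left]
    exact hf.norm_fderiv_le (y + z)
  norm_iteratedFDeriv_two_le z := by
    rw [iteratedFDeriv_comp_add_left]
    exact hf.norm_iteratedFDeriv_two_le (y + z)

lemma norm_sub_le (hf : IsBoundedC2 f B) (x y : V) : ‖f y - f x‖ ≤ B * ‖y - x‖ :=
  convex_univ.norm_image_sub_le_of_norm_fderiv_le
    (fun z _ ↦ hf.contDiff.differentiable (by norm_num) z) (fun z _ ↦ hf.norm_fderiv_le z)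
    (Set.mem_univ x) (Set.mem_univ y)

lemma norm_fderiv_apply_le (hf : IsBoundedC2 f B) (x v : V) : ‖fderiv ℝ f x v‖ ≤ B * ‖v‖ :=
  (fderiv ℝ f x).le_of_opNorm_le (hf.norm_fderiv_le x) v

lemma norm_iteratedFDeriv_two_apply_le (hf : IsBoundedC2 f B) (x v : V) :
    ‖iteratedFDeriv ℝ 2 f x ![v, v]‖ ≤ B * ‖v‖ ^ 2 := by
  refine ((iteratedFDeriv ℝ 2 f x).le_of_opNorm_le (hf.norm_iteratedFDeriv_two_le x) _).trans_eq ?_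
  simp [Fin.prod_univ_two, sq]

variable [FiniteDimensional ℝ V]

lemma norm_laplacian_le (hf : IsBoundedC2 f B) (x : V) : ‖Δ f x‖ ≤ finrank ℝ V * B := by
  rw [laplacian_eq_iteratedFDeriv_stdOrthonormalBasis]
  refine (norm_sum_le_of_le _ fun i _ ↦ hf.norm_iteratedFDeriv_two_apply_le x _).trans_eq ?_
  simp

end IsBoundedC2

variable [FiniteDimensional ℝ V]

lemma laplacian_comp_add_left (f : V → ℂ) (y z : V) : Δ (fun x ↦ f (y + x)) z = Δ f (y + z) := by
  simp only [laplacian_eq_iteratedFDeriv_stdOrthonormalBasis, iteratedFDeriv_comp_add_left]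

lemma continuous_laplacian {f : V → ℂ} (hf : ContDiff ℝ 2 f) : Continuous (Δ f) := by
  rw [laplacian_eq_iteratedFDeriv_stdOrthonormalBasis]
  have := hf.continuous_iteratedFDeriv (m := 2) le_rfl
  fun_prop

variable [MeasurableSpace V] [BorelSpace V] {f g : V → ℂ} {B : ℝ}

lemma IsBoundedC2.integrable_mul (hf : IsBoundedC2 f B) (hg : Integrable g) :
    Integrable fun z ↦ g z * f z :=
  hg.mul_bdd hf.contDiff.continuous.aestronglyMeasurable (.of_forall hf.norm_le)

lemma IsBoundedC2.integrable_mul_fderiv (hf : IsBoundedC2 f B) (hg : Integrable g) (v : V) :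
    Integrable fun z ↦ g z * fderiv ℝ f z v := by
  have hcont := (hf.contDiff.continuous_fderiv (by norm_num)).clm_apply
    (continuous_const (y := v))
  exact hg.mul_bdd hcont.aestronglyMeasurable (.of_forall fun z ↦ hf.norm_fderiv_apply_le z v)

lemma IsBoundedC2.integrable_mul_iteratedFDeriv_two (hf : IsBoundedC2 f B) (hg : Integrable g)
    (v : V) : Integrable fun z ↦ g z * iteratedFDeriv ℝ 2 f z ![v, v] := by
  have hcont := hf.contDiff.continuous_iteratedFDeriv (m := 2) le_rfl
  exact hg.mul_bdd (by fun_prop : Continuous fun z ↦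
    iteratedFDeriv ℝ 2 f z ![v, v]).aestronglyMeasurable
    (.of_forall fun z ↦ hf.norm_iteratedFDeriv_two_apply_le z v)

lemma IsBoundedC2.integrable_mul_laplacian (hf : IsBoundedC2 f B) (hg : Integrable g) :
    Integrable fun z ↦ g z * Δ f z :=
  hg.mul_bdd (continuous_laplacian hf.contDiff).aestronglyMeasurable
    (.of_forall hf.norm_laplacian_le)

lemma integral_mul_iteratedFDeriv_two (hf : IsBoundedC2 f B) (hg : ContDiff ℝ 2 g) {v : V}
    (hg_int : Integrable g) (hg'_int : Integrable fun z ↦ fderiv ℝ g z v)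
    (hg''_int : Integrable fun z ↦ iteratedFDeriv ℝ 2 g z ![v, v]) :
    ∫ z, g z * iteratedFDeriv ℝ 2 f z ![v, v] = ∫ z, iteratedFDeriv ℝ 2 g z ![v, v] * f z := by
  have hf' : ContDiff ℝ 1 fun z ↦ fderiv ℝ f z v :=
    (hf.contDiff.fderiv_right (by norm_num)).clm_apply contDiff_const
  have hg' : ContDiff ℝ 1 fun z ↦ fderiv ℝ g z v :=
    (hg.fderiv_right (by norm_num)).clm_apply contDiff_const
  have hgf'' := hf.integrable_mul_iteratedFDeriv_two hg_int v
  have hg''f := hf.integrable_mul hg''_int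
  have hg'f' := hf.integrable_mul_fderiv hg'_int v
  simp only [iteratedFDeriv_two_eq_fderiv_fderiv hf.contDiff,
    iteratedFDeriv_two_eq_fderiv_fderiv hg] at hgf'' hg''f ⊢
  rw [integral_mul_fderiv_eq_neg_fderiv_mul_of_integrable hg'f' hgf''
      (hf.integrable_mul_fderiv hg_int v) (fun z _ ↦ hg.differentiable (by norm_num) z)
      (fun z _ ↦ hf'.differentiable (by norm_num) z),
    integral_mul_fderiv_eq_neg_fderiv_mul_of_integrable hg''f hg'f' (hf.integrable_mul hg'_int)
      (fun z _ ↦ hg'.differentiable (by norm_num) z)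
      (fun z _ ↦ hf.contDiff.differentiable (by norm_num) z), neg_neg]

lemma integral_mul_laplacian (hf : IsBoundedC2 f B) (hg : ContDiff ℝ 2 g)
    (hg_int : Integrable g) (hg'_int : ∀ v, Integrable fun z ↦ fderiv ℝ g z v)
    (hg''_int : ∀ v, Integrable fun z ↦ iteratedFDeriv ℝ 2 g z ![v, v]) :
    ∫ z, g z * Δ f z = ∫ z, Δ g z * f z := by
  simp only [laplacian_eq_iteratedFDeriv_stdOrthonormalBasis, Finset.mul_sum, Finset.sum_mul]
  rw [integral_finsetSum _ fun i _ ↦ hf.integrable_mul_iteratedFDeriv_two hg_int _,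
    integral_finsetSum _ fun i _ ↦ hf.integrable_mul (hg''_int _)]
  exact Finset.sum_congr rfl fun i _ ↦
    integral_mul_iteratedFDeriv_two hf hg hg_int (hg'_int _) (hg''_int _)

end Laplacian

section HeatKernel

variable {V : Type*} [NormedAddCommGroup V] [InnerProductSpace ℝ V] {κ : ℂ} {τ : ℝ}

/-- The fundamental solution of `∂_τ w = κ Δ w` at time `τ`, for a complex diffusion constant `κ`:
on an `n`-dimensional space it is `(4πκτ)^(-n/2) exp (-‖z‖² / (4κτ))`. -/
noncomputable def heatKernel (κ : ℂ) (τ : ℝ) : V → ℂ :=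
  complexGaussian (4 * κ * τ)⁻¹

/-- The factor in the bound `∫ ‖heatKernel κ τ z‖ e^{a‖z‖} dz ≤ heatMass κ n * e^{a² heatRate κ τ}`
in dimension `n`. -/
noncomputable def heatMass (κ : ℂ) (n : ℕ) : ℝ :=
  (2 * ‖κ‖ / κ.re) ^ (n / 2 : ℝ)

/-- The exponential rate in the bound
`∫ ‖heatKernel κ τ z‖ e^{a‖z‖} dz ≤ heatMass κ n * e^{a² heatRate κ τ}`. -/
noncomputable def heatRate (κ : ℂ) : ℝ :=
  2 * ‖κ‖ ^ 2 / κ.re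

lemma one_le_heatMass (hκ : 0 < κ.re) (n : ℕ) : 1 ≤ heatMass κ n := by
  refine Real.one_le_rpow ?_ (by positivity)
  rw [one_le_div hκ]
  linarith [re_le_norm κ]

lemma heatRate_pos (hκ : 0 < κ.re) : 0 < heatRate κ := by
  have : 0 < ‖κ‖ := hκ.trans_le (re_le_norm κ)
  unfold heatRate
  positivity

lemma re_inv_four_mul (κ : ℂ) (hτ : 0 < τ) :
    (4 * κ * τ)⁻¹.re = κ.re / (4 * ‖κ‖ ^ 2 * τ) := by
  have hre : (4 * κ * τ).re = 4 * κ.re * τ := by simp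
  rw [inv_re, normSq_eq_norm_sq, hre]
  simp only [norm_mul, RCLike.norm_ofNat, norm_real, Real.norm_of_nonneg hτ.le]
  field_simp

lemma norm_inv_four_mul (κ : ℂ) (hτ : 0 < τ) : ‖(4 * κ * τ)⁻¹‖ = (4 * ‖κ‖ * τ)⁻¹ := by
  simp [abs_of_pos hτ]

lemma re_inv_four_mul_pos (hκ : 0 < κ.re) (hτ : 0 < τ) : 0 < (4 * κ * τ)⁻¹.re := by
  have : 0 < ‖κ‖ := hκ.trans_le (re_le_norm κ)
  rw [re_inv_four_mul κ hτ]
  positivity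

lemma contDiff_heatKernel (κ : ℂ) (τ : ℝ) : ContDiff ℝ 2 (heatKernel κ τ : V → ℂ) :=
  contDiff_complexGaussian _

variable [FiniteDimensional ℝ V]

lemma hasDerivAt_heatKernel (hκ : 0 < κ.re) (hτ : 0 < τ) (z : V) :
    HasDerivAt (fun τ ↦ heatKernel κ τ z) (κ * Δ (heatKernel κ τ : V → ℂ) z) τ := by
  have hκ0 : κ ≠ 0 := by rintro rfl; simp at hκ
  have hτ0 : (τ : ℂ) ≠ 0 := mod_cast hτ.ne'
  have hne : 4 * κ * τ ≠ 0 := by simp [hκ0, hτ0]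
  have hwidth : HasDerivAt (fun τ : ℝ ↦ (4 * κ * τ)⁻¹) (-(4 * κ) / (4 * κ * τ) ^ 2) τ := by
    simpa using ((hasDerivAt_id τ).ofReal_comp.const_mul (4 * κ)).fun_inv hne
  refine ((hasDerivAt_complexGaussian (re_inv_four_mul_pos hκ hτ) z).comp τ hwidth).congr_deriv ?_
  simp only [heatKernel, laplacian_complexGaussian]
  field_simp
  ring

variable [MeasurableSpace V] [BorelSpace V]

lemma integrable_heatKernel (hκ : 0 < κ.re) (hτ : 0 < τ) : Integrable (heatKernel κ τ : V → ℂ) :=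
  integrable_complexGaussian (re_inv_four_mul_pos hκ hτ)

lemma integrable_laplacian_heatKernel (hκ : 0 < κ.re) (hτ : 0 < τ) :
    Integrable (Δ (heatKernel κ τ : V → ℂ)) :=
  integrable_laplacian_complexGaussian (re_inv_four_mul_pos hκ hτ)

lemma integral_heatKernel (hκ : 0 < κ.re) (hτ : 0 < τ) : ∫ z : V, heatKernel κ τ z = 1 :=
  integral_complexGaussian (re_inv_four_mul_pos hκ hτ)

lemma integral_norm_heatKernel_mul_exp_le (hκ : 0 < κ.re) (hτ : 0 < τ) (a : ℝ) :
    ∫ z : V, ‖heatKernel κ τ z‖ * Real.exp (a * ‖z‖)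
      ≤ heatMass κ (finrank ℝ V) * Real.exp (a ^ 2 * heatRate κ * τ) := by
  have hnorm : 0 < ‖κ‖ := hκ.trans_le (re_le_norm κ)
  refine (integral_norm_complexGaussian_mul_exp_le (re_inv_four_mul_pos hκ hτ) a).trans_eq ?_
  rw [re_inv_four_mul κ hτ, norm_inv_four_mul κ hτ, heatMass, heatRate]
  congr 2 <;> field_simp
  ring

lemma norm_integral_heatKernel_mul_le (hκ : 0 < κ.re) (hτ : 0 < τ) {f : V → ℂ} {a A : ℝ}
    (hf : ∀ z, ‖f z‖ ≤ A * Real.exp (a * ‖z‖)) :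
    ‖∫ z, heatKernel κ τ z * f z‖
      ≤ heatMass κ (finrank ℝ V) * A * Real.exp (a ^ 2 * heatRate κ * τ) := by
  have hA : 0 ≤ A := by simpa using (norm_nonneg _).trans (hf 0)
  have hint := integrable_norm_complexGaussian_mul_exp (V := V) (re_inv_four_mul_pos hκ hτ) a
  calc ‖∫ z, heatKernel κ τ z * f z‖
      ≤ ∫ z, A * (‖heatKernel κ τ z‖ * Real.exp (a * ‖z‖)) := by
        refine norm_integral_le_of_norm_le (hint.const_mul A) (.of_forall fun z ↦ ?_)
        rw [norm_mul, mul_left_comm]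
        gcongr
        exact hf z
    _ ≤ A * (heatMass κ (finrank ℝ V) * Real.exp (a ^ 2 * heatRate κ * τ)) := by
        rw [integral_const_mul]
        gcongr
        exact integral_norm_heatKernel_mul_exp_le hκ hτ a
    _ = heatMass κ (finrank ℝ V) * A * Real.exp (a ^ 2 * heatRate κ * τ) := by ring

lemma norm_integral_heatKernel_mul_sub_le (hκ : 0 < κ.re) (hτ : 0 < τ) {f : V → ℂ} {B : ℝ}
    (hf : IsBoundedC2 f B) :
    ‖(∫ z, heatKernel κ τ z * f z) - f 0‖
      ≤ heatMass κ (finrank ℝ V) * (B * √τ) * Real.exp (heatRate κ) := by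
  have hB : 0 ≤ B := (norm_nonneg _).trans (hf.norm_le 0)
  have hsub : (∫ z, heatKernel κ τ z * f z) - f 0 = ∫ z, heatKernel κ τ z * (f z - f 0) := by
    have hint := integrable_heatKernel (V := V) hκ hτ
    simp only [mul_sub]
    rw [integral_sub (hf.integrable_mul hint) (hint.mul_const _), integral_mul_const,
      integral_heatKernel hκ hτ, one_mul]
  -- The weight `e^{a‖z‖}` with `a = 1 / √τ` dominates `‖z‖ / √τ` while `a² τ = 1`.
  have hweight : ∀ z : V, ‖f z - f 0‖ ≤ B * √τ * Real.exp ((√τ)⁻¹ * ‖z‖) := fun z ↦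
    calc ‖f z - f 0‖ ≤ B * ‖z‖ := by simpa using hf.norm_sub_le 0 z
      _ = B * √τ * ((√τ)⁻¹ * ‖z‖) := by field_simp
      _ ≤ B * √τ * Real.exp ((√τ)⁻¹ * ‖z‖) := by
        gcongr
        exact (lt_add_one _).le.trans (Real.add_one_le_exp _)
  rw [hsub]
  refine (norm_integral_heatKernel_mul_le hκ hτ hweight).trans_eq ?_
  rw [inv_pow, Real.sq_sqrt hτ.le, mul_right_comm τ⁻¹, inv_mul_cancel₀ hτ.ne', one_mul]

lemma tendsto_integral_heatKernel_mul (hκ : 0 < κ.re) {f : V → ℂ} {B : ℝ}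
    (hf : IsBoundedC2 f B) :
    Tendsto (fun τ ↦ ∫ z, heatKernel κ τ z * f z) (𝓝[>] 0) (𝓝 (f 0)) := by
  have hbound : Tendsto (fun τ ↦ heatMass κ (finrank ℝ V) * (B * √τ) * Real.exp (heatRate κ))
      (𝓝[>] 0) (𝓝 0) := by
    refine tendsto_nhdsWithin_of_tendsto_nhds (Continuous.tendsto' (by fun_prop) _ _ ?_)
    simp
  rw [tendsto_iff_norm_sub_tendsto_zero]
  refine squeeze_zero' (.of_forall fun _ ↦ norm_nonneg _) ?_ hbound
  filter_upwards [self_mem_nhdsWithin] with τ hτ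
  exact norm_integral_heatKernel_mul_sub_le hκ hτ hf

lemma integral_heatKernel_mul_laplacian (hκ : 0 < κ.re) (hτ : 0 < τ) {f : V → ℂ} {B : ℝ}
    (hf : IsBoundedC2 f B) :
    ∫ z, heatKernel κ τ z * Δ f z = ∫ z, Δ (heatKernel κ τ : V → ℂ) z * f z :=
  have hre := re_inv_four_mul_pos hκ hτ
  integral_mul_laplacian hf (contDiff_heatKernel κ τ) (integrable_heatKernel hκ hτ)
    (integrable_fderiv_complexGaussian hre) (integrable_iteratedFDeriv_two_complexGaussian hre)

lemma integral_heatKernel_mul_sub_laplacian_mul (hκ : 0 < κ.re) (hτ : 0 < τ) {f φ : V → ℂ} {B : ℝ}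
    (hf : IsBoundedC2 f B) (hφ : Integrable fun z ↦ heatKernel κ τ z * φ z) :
    ∫ z, (heatKernel κ τ z * (κ * Δ f z + φ z) - κ * Δ (heatKernel κ τ : V → ℂ) z * f z)
      = ∫ z, heatKernel κ τ z * φ z := by
  have hgreen := integral_heatKernel_mul_laplacian hκ hτ hf
  have hleft := (hf.integrable_mul_laplacian (integrable_heatKernel hκ hτ)).const_mul κ
  have hright := (hf.integrable_mul (integrable_laplacian_heatKernel hκ hτ)).const_mul κ
  simp only [mul_add, mul_left_comm _ κ, mul_assoc]
  rw [integral_sub (by exact hleft.add hφ) hright, integral_add hleft hφ, integral_const_mul,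
    integral_const_mul, hgreen, add_sub_cancel_left]

lemma exists_integrable_bound_heatKernel (hκ : 0 < κ.re) {τ₀ τ₁ : ℝ} (hτ₀ : 0 < τ₀)
    (hτ : τ₀ ≤ τ₁) :
    ∃ bound : V → ℝ, Integrable bound ∧ ∀ τ ∈ Set.Icc τ₀ τ₁, ∀ z : V,
      ‖heatKernel κ τ z‖ ≤ bound z ∧ ‖Δ (heatKernel κ τ : V → ℂ) z‖ ≤ bound z := by
  obtain ⟨bound, hbound, hle⟩ := exists_integrable_bound_complexGaussian (V := V)
    (re_inv_four_mul_pos hκ (hτ₀.trans_le hτ)) ‖(4 * κ * τ₀)⁻¹‖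
  have hnorm : 0 < ‖κ‖ := hκ.trans_le (re_le_norm κ)
  refine ⟨bound, hbound, fun τ hτ' ↦ ?_⟩
  have hτpos := hτ₀.trans_le hτ'.1
  refine hle _ ?_ ?_
  · rw [re_inv_four_mul κ hτpos, re_inv_four_mul κ (hτ₀.trans_le hτ)]
    gcongr
    exact hτ'.2
  · rw [norm_inv_four_mul κ hτpos, norm_inv_four_mul κ hτ₀]
    gcongr
    exact hτ'.1

end HeatKernel

section Duhamel

lemma norm_le_of_norm_deriv_le {E : Type*} [NormedAddCommGroup E] [NormedSpace ℝ E] {f f' : ℝ → E}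
    {g g' : ℝ → ℝ} {a b : ℝ} (hab : a ≤ b) (hf : ContinuousOn f (Set.Icc a b))
    (hf' : ∀ s ∈ Set.Ioo a b, HasDerivAt f (f' s) s)
    (hg : ∀ s, HasDerivAt g (g' s) s) (hg' : Continuous g') (ha : ‖f a‖ ≤ g a)
    (hle : ∀ s ∈ Set.Ioo a b, ‖f' s‖ ≤ g' s) : ‖f b‖ ≤ g b := by
  have hint := hg'.intervalIntegrable (μ := volume) a b
  have hsub : ‖f b - f a‖ ≤ ∫ s in a..b, g' s :=
    norm_sub_le_integral_of_norm_deriv_le_of_le hab hf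
      (fun s hs ↦ (hf' s hs).differentiableAt.differentiableWithinAt)
      (.of_forall fun s hs ↦ (hf' s hs).deriv ▸ hle s hs) hint
  rw [intervalIntegral.integral_eq_sub_of_hasDerivAt (fun s _ ↦ hg s) hint] at hsub
  linarith [norm_le_norm_add_norm_sub' (f b) (f a)]

variable {V : Type*} [NormedAddCommGroup V] [InnerProductSpace ℝ V] [FiniteDimensional ℝ V]

/-- `w` is a classical solution of the inhomogeneous complex heat equation `∂_s w = κ Δ w + F` on
`V × [0, t]`. The constant `B` bounds `w` together with its first two spatial derivatives, and `N`
bounds the forcing `F`, which need not be continuous in time. -/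
structure IsBoundedHeatSolution (κ : ℂ) (t B N : ℝ) (w F : V → ℝ → ℂ) : Prop where
  isBoundedC2 : ∀ s ∈ Set.Icc 0 t, IsBoundedC2 (fun x ↦ w x s) B
  continuous_forcing : ∀ s ∈ Set.Icc 0 t, Continuous fun x ↦ F x s
  norm_forcing_le : ∀ s ∈ Set.Icc 0 t, ∀ x, ‖F x s‖ ≤ N
  hasDerivWithinAt : ∀ x, ∀ s ∈ Set.Icc 0 t,
    HasDerivWithinAt (w x) (κ * Δ (fun y ↦ w y s) x + F x s) (Set.Icc 0 t) s

namespace IsBoundedHeatSolution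

variable {κ : ℂ} {t B N T : ℝ} {w F : V → ℝ → ℂ}

lemma mono (hw : IsBoundedHeatSolution κ t B N w F) {t' : ℝ} (ht : t' ≤ t) :
    IsBoundedHeatSolution κ t' B N w F :=
  have hsub : Set.Icc 0 t' ⊆ Set.Icc 0 t := Set.Icc_subset_Icc_right ht
  { isBoundedC2 := fun s hs ↦ hw.isBoundedC2 s (hsub hs)
    continuous_forcing := fun s hs ↦ hw.continuous_forcing s (hsub hs)
    norm_forcing_le := fun s hs ↦ hw.norm_forcing_le s (hsub hs)
    hasDerivWithinAt := fun x s hs ↦ (hw.hasDerivWithinAt x s (hsub hs)).mono hsub }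

lemma comp_add_left (hw : IsBoundedHeatSolution κ t B N w F) (y : V) :
    IsBoundedHeatSolution κ t B N (fun z ↦ w (y + z)) (fun z ↦ F (y + z)) where
  isBoundedC2 s hs := (hw.isBoundedC2 s hs).comp_add_left y
  continuous_forcing s hs := (hw.continuous_forcing s hs).comp (by fun_prop)
  norm_forcing_le s hs z := hw.norm_forcing_le s hs (y + z)
  hasDerivWithinAt z s hs := by
    rw [laplacian_comp_add_left fun y ↦ w y s]
    exact hw.hasDerivWithinAt (y + z) s hs

lemma hasDerivWithinAt_heatKernel_mul (hw : IsBoundedHeatSolution κ t B N w F) (hκ : 0 < κ.re)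
    (hT : t < T) (z : V) {s : ℝ} (hs : s ∈ Set.Icc 0 t) :
    HasDerivWithinAt (fun s ↦ heatKernel κ (T - s) z * w z s)
      (heatKernel κ (T - s) z * (κ * Δ (fun y ↦ w y s) z + F z s)
        - κ * Δ (heatKernel κ (T - s) : V → ℂ) z * w z s) (Set.Icc 0 t) s := by
  have hkernel := (hasDerivAt_heatKernel hκ (sub_pos.mpr (hs.2.trans_lt hT)) z).scomp s
    ((hasDerivAt_id s).const_sub T)
  refine (hkernel.hasDerivWithinAt.mul (hw.hasDerivWithinAt z s hs)).congr_deriv ?_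
  simp only [Function.comp_apply, neg_smul, one_smul]
  ring

variable [MeasurableSpace V] [BorelSpace V]

lemma exists_integrable_bound_heatKernel_mul (hw : IsBoundedHeatSolution κ t B N w F)
    (hκ : 0 < κ.re) (ht : 0 ≤ t) (hT : t < T) :
    ∃ bound : V → ℝ, Integrable bound ∧ ∀ s ∈ Set.Icc 0 t, ∀ z : V,
      ‖heatKernel κ (T - s) z * w z s‖ ≤ bound z ∧
      ‖heatKernel κ (T - s) z * (κ * Δ (fun y ↦ w y s) z + F z s)
        - κ * Δ (heatKernel κ (T - s) : V → ℂ) z * w z s‖ ≤ bound z := by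
  obtain ⟨bound, hbound, hle⟩ := exists_integrable_bound_heatKernel (V := V) hκ
    (sub_pos.mpr hT) (sub_le_sub_left ht T)
  have hB : 0 ≤ B := (norm_nonneg _).trans ((hw.isBoundedC2 0 ⟨le_rfl, ht⟩).norm_le 0)
  have hN : 0 ≤ N := (norm_nonneg _).trans (hw.norm_forcing_le 0 ⟨le_rfl, ht⟩ 0)
  refine ⟨fun z ↦ (B + (‖κ‖ * (finrank ℝ V * B) + N + ‖κ‖ * B)) * bound z, hbound.const_mul _,
    fun s hs z ↦ ?_⟩
  obtain ⟨hkernel, hlaplacian⟩ := hle (T - s) ⟨by linarith [hs.2], by linarith [hs.1]⟩ z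
  have hbound0 : 0 ≤ bound z := (norm_nonneg _).trans hkernel
  have hC2 := hw.isBoundedC2 s hs
  constructor
  · calc _ ≤ bound z * B := norm_mul_le_of_le hkernel (hC2.norm_le z)
      _ ≤ _ := by
        rw [mul_comm]
        exact mul_le_mul_of_nonneg_right (le_add_of_nonneg_right (by positivity)) hbound0
  · calc _ ≤ bound z * (‖κ‖ * (finrank ℝ V * B) + N) + ‖κ‖ * bound z * B :=
        norm_sub_le_of_le
          (norm_mul_le_of_le hkernel (norm_add_le_of_le
            (norm_mul_le_of_le le_rfl (hC2.norm_laplacian_le z)) (hw.norm_forcing_le s hs z)))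
          (norm_mul_le_of_le (norm_mul_le_of_le le_rfl hlaplacian) (hC2.norm_le z))
      _ ≤ _ := by linarith [mul_nonneg hB hbound0]

lemma continuousOn_integral (hw : IsBoundedHeatSolution κ t B N w F) (hκ : 0 < κ.re)
    (ht : 0 ≤ t) (hT : t < T) :
    ContinuousOn (fun s ↦ ∫ z, heatKernel κ (T - s) z * w z s) (Set.Icc 0 t) := by
  obtain ⟨bound, hbound, hle⟩ := hw.exists_integrable_bound_heatKernel_mul hκ ht hT
  refine continuousOn_of_dominated (fun s hs ↦ ?_) (fun s hs ↦ .of_forall fun z ↦ (hle s hs z).1)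
    hbound (.of_forall fun z s hs ↦
      (hw.hasDerivWithinAt_heatKernel_mul hκ hT z hs).continuousWithinAt)
  exact ((contDiff_heatKernel κ _).continuous.mul
    (hw.isBoundedC2 s hs).contDiff.continuous).aestronglyMeasurable

lemma hasDerivAt_integral (hw : IsBoundedHeatSolution κ t B N w F) (hκ : 0 < κ.re)
    (hT : t < T) {s : ℝ} (hs : s ∈ Set.Ioo 0 t) :
    HasDerivAt (fun s ↦ ∫ z, heatKernel κ (T - s) z * w z s)
      (∫ z, heatKernel κ (T - s) z * F z s) s := by
  have hsub : Set.Ioo 0 t ⊆ Set.Icc 0 t := Set.Ioo_subset_Icc_self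
  have hτ : 0 < T - s := by linarith [hs.2]
  have hC2 := hw.isBoundedC2 s (hsub hs)
  have hF := hw.continuous_forcing s (hsub hs)
  have hcont (r : ℝ) : Continuous (heatKernel κ (T - r) : V → ℂ) :=
    (contDiff_heatKernel κ _).continuous
  have hint := integrable_heatKernel (V := V) hκ hτ
  have hΔkernel := continuous_laplacian (contDiff_heatKernel (V := V) κ (T - s))
  have hΔw := continuous_laplacian hC2.contDiff
  obtain ⟨bound, hbound, hle⟩ :=
    hw.exists_integrable_bound_heatKernel_mul hκ (hs.1.trans hs.2).le hT
  refine (hasDerivAt_integral_of_dominated_loc_of_deriv_le (Ioo_mem_nhds hs.1 hs.2)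
    (F := fun s z ↦ heatKernel κ (T - s) z * w z s) ?_ (hC2.integrable_mul hint) ?_
    (.of_forall fun z r hr ↦ (hle r (hsub hr) z).2) hbound (.of_forall fun z r hr ↦
      (hw.hasDerivWithinAt_heatKernel_mul hκ hT z (hsub hr)).hasDerivAt
        (Icc_mem_nhds hr.1 hr.2))).2.congr_deriv ?_
  · filter_upwards [Ioo_mem_nhds hs.1 hs.2] with r hr
    exact ((hcont r).mul (hw.isBoundedC2 r (hsub hr)).contDiff.continuous).aestronglyMeasurable
  · exact (((hcont s).mul ((hΔw.const_mul κ).add hF)).sub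
      ((hΔkernel.const_mul κ).mul hC2.contDiff.continuous)).aestronglyMeasurable
  · exact integral_heatKernel_mul_sub_laplacian_mul hκ hτ hC2
      (hint.mul_bdd hF.aestronglyMeasurable (.of_forall (hw.norm_forcing_le s (hsub hs))))

lemma norm_integral_le (hw : IsBoundedHeatSolution κ t B N w F) (hκ : 0 < κ.re)
    (ht : 0 ≤ t) {γ A D δ : ℝ} (hγ : heatRate κ < γ) (hδ : 0 < δ)
    (hinit : ∀ z, ‖w z 0‖ ≤ A * Real.exp ‖z‖)
    (hF : ∀ s ∈ Set.Icc 0 t, ∀ z, ‖F z s‖ ≤ D * Real.exp (γ * s) * Real.exp ‖z‖) :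
    ‖∫ z, heatKernel κ δ z * w z t‖ ≤ heatMass κ (finrank ℝ V) * (A + D / (γ - heatRate κ))
      * Real.exp (γ * t) * Real.exp (heatRate κ * δ) := by
  have hmass : 0 ≤ heatMass κ (finrank ℝ V) := zero_le_one.trans (one_le_heatMass hκ _)
  have hD : 0 ≤ D := by simpa using (norm_nonneg _).trans (hF 0 ⟨le_rfl, ht⟩ 0)
  have hrate : 0 < γ - heatRate κ := sub_pos.mpr hγ
  have hT : t < t + δ := lt_add_of_pos_right t hδ
  set c := heatMass κ (finrank ℝ V) * (A + D / (γ - heatRate κ)) with hc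
  have hkernel {s G : ℝ} (hs : s ≤ t) {f : V → ℂ} (hf : ∀ z, ‖f z‖ ≤ G * Real.exp ‖z‖) :
      ‖∫ z, heatKernel κ (t + δ - s) z * f z‖
        ≤ heatMass κ (finrank ℝ V) * G * Real.exp (heatRate κ * (t + δ - s)) := by
    simpa using norm_integral_heatKernel_mul_le hκ (a := 1) (τ := t + δ - s) (by linarith)
      (by simpa using hf)
  have hmajorant (s : ℝ) : HasDerivAt
      (fun s ↦ c * Real.exp (γ * s) * Real.exp (heatRate κ * (t + δ - s)))
      ((γ - heatRate κ) * c * Real.exp (γ * s) * Real.exp (heatRate κ * (t + δ - s))) s := by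
    refine ((((hasDerivAt_id s).const_mul γ).exp.const_mul c).mul
      (((hasDerivAt_id s).const_sub (t + δ)).const_mul (heatRate κ)).exp).congr_deriv ?_
    simp only [id]
    ring
  suffices ‖∫ z, heatKernel κ (t + δ - t) z * w z t‖
      ≤ c * Real.exp (γ * t) * Real.exp (heatRate κ * (t + δ - t)) by
    simpa only [add_sub_cancel_left] using this
  refine norm_le_of_norm_deriv_le ht (hw.continuousOn_integral hκ ht hT)
    (fun s hs ↦ hw.hasDerivAt_integral hκ hT hs) hmajorant (by fun_prop) ?_ fun s hs ↦ ?_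
  · refine (hkernel ht hinit).trans ?_
    rw [mul_zero, Real.exp_zero, mul_one, hc]
    gcongr
    exact le_add_of_nonneg_right (by positivity)
  · refine (hkernel hs.2.le (hF s (Set.Ioo_subset_Icc_self hs))).trans ?_
    rw [← mul_assoc]
    gcongr ?_ * Real.exp _ * Real.exp _
    calc heatMass κ (finrank ℝ V) * D
        ≤ heatMass κ (finrank ℝ V) * ((γ - heatRate κ) * A + D) := by
          gcongr
          exact le_add_of_nonneg_left (mul_nonneg hrate.le
            (by simpa using (norm_nonneg _).trans (hinit 0)))
      _ = (γ - heatRate κ) * c := by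
          rw [hc]
          field_simp

lemma norm_apply_zero_le (hw : IsBoundedHeatSolution κ t B N w F) (hκ : 0 < κ.re)
    (ht : 0 ≤ t) {γ A D : ℝ} (hγ : heatRate κ < γ)
    (hinit : ∀ z, ‖w z 0‖ ≤ A * Real.exp ‖z‖)
    (hF : ∀ s ∈ Set.Icc 0 t, ∀ z, ‖F z s‖ ≤ D * Real.exp (γ * s) * Real.exp ‖z‖) :
    ‖w 0 t‖ ≤ heatMass κ (finrank ℝ V) * (A + D / (γ - heatRate κ)) * Real.exp (γ * t) := by
  have hlhs := (tendsto_integral_heatKernel_mul hκ (hw.isBoundedC2 t ⟨ht, le_rfl⟩)).norm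
  have hrhs : Tendsto (fun δ ↦ heatMass κ (finrank ℝ V) * (A + D / (γ - heatRate κ))
      * Real.exp (γ * t) * Real.exp (heatRate κ * δ)) (𝓝[>] 0)
      (𝓝 (heatMass κ (finrank ℝ V) * (A + D / (γ - heatRate κ)) * Real.exp (γ * t))) :=
    tendsto_nhdsWithin_of_tendsto_nhds (Continuous.tendsto' (by fun_prop) _ _ (by simp))
  refine le_of_tendsto_of_tendsto hlhs hrhs ?_
  filter_upwards [self_mem_nhdsWithin] with δ hδ
  exact hw.norm_integral_le hκ ht hγ hδ hinit hF

end IsBoundedHeatSolution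
end Duhamel

section Absorption

lemma le_two_mul_of_forall_le_add_half {ι : Type*} {f : ι → ℝ} {a : ℝ}
    (hbdd : BddAbove (Set.range f)) (h : ∀ R, (∀ i, f i ≤ R) → ∀ i, f i ≤ a + R / 2) (i : ι) :
    f i ≤ 2 * a := by
  have : Nonempty ι := ⟨i⟩
  have hsup := ciSup_le (h _ (le_ciSup hbdd))
  linarith [le_ciSup hbdd i]

variable {V : Type*} [NormedAddCommGroup V] [InnerProductSpace ℝ V] [FiniteDimensional ℝ V]

/-- The exponential growth rate, in dimension `n`, of solutions of the complex heat equation whose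
forcing is at most `K` times the solution; it makes the Duhamel operator a contraction by `1/2`. -/
noncomputable def growthRate (κ : ℂ) (n : ℕ) (K : ℝ) : ℝ :=
  heatRate κ + 2 * heatMass κ n * K

namespace IsBoundedHeatSolution

variable [MeasurableSpace V] [BorelSpace V] {κ : ℂ} {t B N A K : ℝ} {w F : V → ℝ → ℂ} {x : V}

lemma norm_le_add_half (hw : IsBoundedHeatSolution κ t B N w F) (hκ : 0 < κ.re) (hK : 0 < K)
    (hF : ∀ s ∈ Set.Icc 0 t, ∀ y, ‖F y s‖ ≤ K * ‖w y s‖)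
    (hinit : ∀ y, ‖w y 0‖ ≤ A * Real.exp ‖y - x‖) {R : ℝ}
    (hR : ∀ s ∈ Set.Icc 0 t, ∀ y,
      ‖w y s‖ ≤ R * Real.exp (growthRate κ (finrank ℝ V) K * s) * Real.exp ‖y - x‖)
    {s : ℝ} (hs : s ∈ Set.Icc 0 t) (y : V) :
    ‖w y s‖ ≤ (heatMass κ (finrank ℝ V) * A + R / 2)
      * Real.exp (growthRate κ (finrank ℝ V) K * s) * Real.exp ‖y - x‖ := by
  set γ := growthRate κ (finrank ℝ V) K
  have hmass : 0 < heatMass κ (finrank ℝ V) := zero_lt_one.trans_le (one_le_heatMass hκ _)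
  have hA : 0 ≤ A := by simpa using (norm_nonneg _).trans (hinit x)
  have hR0 : 0 ≤ R := by simpa using (norm_nonneg _).trans (hR 0 ⟨le_rfl, hs.1.trans hs.2⟩ x)
  have hrate : γ - heatRate κ = 2 * heatMass κ (finrank ℝ V) * K := add_sub_cancel_left _ _
  have hexp (z : V) : Real.exp ‖y + z - x‖ ≤ Real.exp ‖y - x‖ * Real.exp ‖z‖ := by
    rw [← Real.exp_add, add_sub_right_comm]
    exact Real.exp_le_exp.mpr (norm_add_le _ _)
  have hbound := ((hw.mono hs.2).comp_add_left y).norm_apply_zero_le hκ hs.1 (γ := γ)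
    (A := A * Real.exp ‖y - x‖) (D := K * R * Real.exp ‖y - x‖)
    (sub_pos.mp (hrate ▸ by positivity)) (fun z ↦ ?_) (fun r hr z ↦ ?_)
  · rw [add_zero, hrate] at hbound
    refine hbound.trans_eq ?_
    field_simp
  · calc ‖w (y + z) 0‖ ≤ A * Real.exp ‖y + z - x‖ := hinit _
      _ ≤ A * (Real.exp ‖y - x‖ * Real.exp ‖z‖) := by gcongr; exact hexp z
      _ = A * Real.exp ‖y - x‖ * Real.exp ‖z‖ := by ring
  · have hr' : r ∈ Set.Icc 0 t := ⟨hr.1, hr.2.trans hs.2⟩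
    calc ‖F (y + z) r‖ ≤ K * ‖w (y + z) r‖ := hF r hr' _
      _ ≤ K * (R * Real.exp (γ * r) * (Real.exp ‖y - x‖ * Real.exp ‖z‖)) := by
        gcongr
        exact (hR r hr' _).trans (by gcongr; exact hexp z)
      _ = K * R * Real.exp ‖y - x‖ * Real.exp (γ * r) * Real.exp ‖z‖ := by ring

lemma norm_apply_le (hw : IsBoundedHeatSolution κ t B N w F) (hκ : 0 < κ.re) (ht : 0 ≤ t)
    (hK : 0 < K) (hF : ∀ s ∈ Set.Icc 0 t, ∀ y, ‖F y s‖ ≤ K * ‖w y s‖)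
    (hinit : ∀ y, ‖w y 0‖ ≤ A * Real.exp ‖y - x‖) :
    ‖w x t‖ ≤ 2 * (heatMass κ (finrank ℝ V) * A)
      * Real.exp (growthRate κ (finrank ℝ V) K * t) := by
  set γ := growthRate κ (finrank ℝ V) K with hγ
  set weight : V × Set.Icc 0 t → ℝ := fun p ↦ Real.exp (γ * p.2) * Real.exp ‖p.1 - x‖
  have hweight (p) : 0 < weight p := by positivity
  have hγ0 : 0 ≤ γ := by
    have := heatRate_pos hκ
    have := one_le_heatMass hκ (finrank ℝ V)
    rw [hγ, growthRate]
    positivity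
  have hbdd : BddAbove (Set.range fun p : V × Set.Icc 0 t ↦ ‖w p.1 p.2‖ / weight p) := by
    refine ⟨B, Set.forall_mem_range.mpr fun ⟨y, s, hs⟩ ↦ ?_⟩
    have hone : 1 ≤ weight (y, ⟨s, hs⟩) := one_le_mul_of_one_le_of_one_le
      (Real.one_le_exp (mul_nonneg hγ0 hs.1)) (Real.one_le_exp (norm_nonneg _))
    exact (div_le_self (norm_nonneg _) hone).trans ((hw.isBoundedC2 s hs).norm_le y)
  have habsorb := le_two_mul_of_forall_le_add_half hbdd (a := heatMass κ (finrank ℝ V) * A)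
    (fun R hR ⟨y, s, hs⟩ ↦ ?_) (x, ⟨t, ht, le_rfl⟩)
  · simpa [weight, div_le_iff₀ (Real.exp_pos _)] using habsorb
  · rw [div_le_iff₀ (hweight _), ← mul_assoc]
    refine hw.norm_le_add_half hκ hK hF hinit (fun r hr z ↦ ?_) hs y
    rw [mul_assoc]
    exact (div_le_iff₀ (hweight _)).mp (hR (z, ⟨r, hr⟩))

end IsBoundedHeatSolution
end Absorption

section Reaction

lemma rpow_sub_rpow_mul_le {a b p : ℝ} (hb : 0 ≤ b) (hab : b ≤ a) (hp : 0 ≤ p) :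
    (a ^ p - b ^ p) * b ≤ p * a ^ p * (a - b) := by
  obtain rfl | hb := hb.eq_or_lt
  · have : 0 ≤ p * a ^ p * (a - 0) := by rw [sub_zero]; positivity
    simpa using this
  have ha : 0 < a := hb.trans_le hab
  have hlog : 1 - (b / a) ^ p ≤ p * (a / b - 1) :=
    calc 1 - (b / a) ^ p = 1 - ((a / b) ^ p)⁻¹ := by
          rw [← Real.inv_rpow (by positivity), inv_div]
      _ ≤ p * Real.log (a / b) := by
          rw [← Real.log_rpow (by positivity)]
          exact Real.one_sub_inv_le_log_of_pos (by positivity)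
      _ ≤ p * (a / b - 1) := by
          gcongr
          exact Real.log_le_sub_one_of_pos (by positivity)
  calc (a ^ p - b ^ p) * b = a ^ p * b * (1 - (b / a) ^ p) := by
        rw [Real.div_rpow hb.le ha.le]
        field_simp
    _ ≤ a ^ p * b * (p * (a / b - 1)) := by gcongr
    _ = p * a ^ p * (a - b) := by field_simp

lemma norm_rpow_norm_smul_sub_le {E : Type*} [NormedAddCommGroup E] [NormedSpace ℝ E] {p M : ℝ}
    (hp : 0 ≤ p) {u v : E} (hu : ‖u‖ ≤ M) (hv : ‖v‖ ≤ M) :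
    ‖‖u‖ ^ p • u - ‖v‖ ^ p • v‖ ≤ (1 + p) * M ^ p * ‖u - v‖ := by
  wlog huv : ‖v‖ ≤ ‖u‖ generalizing u v
  · rw [norm_sub_rev, norm_sub_rev u]
    exact this hv hu (le_of_not_ge huv)
  have hpow : ‖v‖ ^ p ≤ ‖u‖ ^ p := by gcongr
  have hsplit : ‖u‖ ^ p • u - ‖v‖ ^ p • v = ‖u‖ ^ p • (u - v) + (‖u‖ ^ p - ‖v‖ ^ p) • v := by
    module
  calc ‖‖u‖ ^ p • u - ‖v‖ ^ p • v‖
      ≤ ‖u‖ ^ p * ‖u - v‖ + (‖u‖ ^ p - ‖v‖ ^ p) * ‖v‖ := by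
        rw [hsplit]
        refine norm_add_le_of_le ?_ ?_ <;> rw [norm_smul, Real.norm_of_nonneg]
        · positivity
        · exact sub_nonneg.mpr hpow
    _ ≤ ‖u‖ ^ p * ‖u - v‖ + p * ‖u‖ ^ p * ‖u - v‖ := by
        grw [rpow_sub_rpow_mul_le (norm_nonneg v) huv hp, norm_sub_norm_le]
    _ = (1 + p) * ‖u‖ ^ p * ‖u - v‖ := by ring
    _ ≤ (1 + p) * M ^ p * ‖u - v‖ := by gcongr

/-- The reaction term `z - (1 + iβ) |z|^{2q} z` of the Ginzburg–Landau equation. -/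
noncomputable def glReaction (q β : ℝ) (z : ℂ) : ℂ :=
  z - (1 + I * (β : ℂ)) * ((‖z‖ ^ (2 * q) : ℝ) : ℂ) * z

/-- A Lipschitz constant of `glReaction q β` on the disc of radius `M`. -/
noncomputable def glLipschitz (q β M : ℝ) : ℝ :=
  1 + ‖1 + I * (β : ℂ)‖ * ((1 + 2 * q) * M ^ (2 * q))

variable {q β M : ℝ}

lemma glLipschitz_pos (hq : 0 ≤ q) (β : ℝ) (hM : 0 ≤ M) : 0 < glLipschitz q β M := by
  unfold glLipschitz
  positivity

lemma norm_glReaction_sub_le (hq : 0 ≤ q) (β : ℝ) {u v : ℂ} (hu : ‖u‖ ≤ M) (hv : ‖v‖ ≤ M) :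
    ‖glReaction q β u - glReaction q β v‖ ≤ glLipschitz q β M * ‖u - v‖ :=
  calc ‖glReaction q β u - glReaction q β v‖
      = ‖(u - v) - (1 + I * (β : ℂ)) * (‖u‖ ^ (2 * q) • u - ‖v‖ ^ (2 * q) • v)‖ := by
        simp only [glReaction, real_smul]
        ring_nf
    _ ≤ ‖u - v‖ + ‖1 + I * (β : ℂ)‖ * ((1 + 2 * q) * M ^ (2 * q) * ‖u - v‖) :=
        norm_sub_le_of_le le_rfl (norm_mul_le_of_le le_rfl
          (norm_rpow_norm_smul_sub_le (by positivity) hu hv))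
    _ = glLipschitz q β M * ‖u - v‖ := by rw [glLipschitz]; ring

lemma continuous_glReaction (hq : 0 ≤ q) (β : ℝ) : Continuous (glReaction q β) := by
  have hpow : Continuous fun z : ℂ ↦ ‖z‖ ^ (2 * q) :=
    continuous_norm.rpow_const fun _ ↦ .inr (by positivity)
  unfold glReaction
  fun_prop

end Reaction

section GinzburgLandau

variable {d : ℕ} {q α β M t : ℝ} {g u v : EuclideanSpace ℝ (Fin d) → ℝ → ℂ}

lemma lap_eq_laplacian (f : EuclideanSpace ℝ (Fin d) → ℂ) : lap d f = Δ f := by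
  rw [laplacian_eq_iteratedFDeriv_orthonormalBasis f (EuclideanSpace.basisFun (Fin d) ℝ)]
  simp only [EuclideanSpace.basisFun_apply]
  rfl

lemma IsGLSolution.exists_isBoundedC2 {S : Set ℝ} (hu : IsGLSolution d q α β S g u) :
    ∃ B, ∀ s ∈ S, IsBoundedC2 (fun x ↦ u x s) B := by
  obtain ⟨-, hcont, ⟨B, hB⟩, -⟩ := hu
  exact ⟨B, fun s hs ↦ ⟨hcont s hs, fun x ↦ (hB s hs x).1, fun x ↦ (hB s hs x).2.1,
    fun x ↦ (hB s hs x).2.2⟩⟩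

lemma IsGLSolution.hasDerivWithinAt {S : Set ℝ} (hu : IsGLSolution d q α β S g u)
    (x : EuclideanSpace ℝ (Fin d)) {s : ℝ} (hs : s ∈ S) :
    HasDerivWithinAt (u x)
      ((1 + I * (α : ℂ)) * Δ (fun y ↦ u y s) x + glReaction q β (u x s) + g x s) S s := by
  refine (hu.2.2.2 x s hs).congr_deriv ?_
  rw [lap_eq_laplacian, glReaction, add_sub_assoc]

lemma IsGLSolution.exists_isBoundedHeatSolution_sub (hq : 0 ≤ q)
    (hu : IsGLSolution d q α β (Set.Icc 0 t) g u) (hv : IsGLSolution d q α β (Set.Icc 0 t) g v)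
    (hM : ∀ x, ∀ s ∈ Set.Icc 0 t, ‖u x s‖ ≤ M ∧ ‖v x s‖ ≤ M) :
    ∃ B N, IsBoundedHeatSolution (1 + I * (α : ℂ)) t B N (fun x s ↦ u x s - v x s)
      (fun x s ↦ glReaction q β (u x s) - glReaction q β (v x s)) := by
  obtain ⟨Bu, hBu⟩ := hu.exists_isBoundedC2
  obtain ⟨Bv, hBv⟩ := hv.exists_isBoundedC2
  refine ⟨Bu + Bv, glLipschitz q β M * (M + M), fun s hs ↦ (hBu s hs).sub (hBv s hs),
    fun s hs ↦ ?_, fun s hs x ↦ ?_, fun x s hs ↦ ?_⟩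
  · exact ((continuous_glReaction hq β).comp (hBu s hs).contDiff.continuous).sub
      ((continuous_glReaction hq β).comp (hBv s hs).contDiff.continuous)
  · obtain ⟨hux, hvx⟩ := hM x s hs
    have hK := glLipschitz_pos hq β ((norm_nonneg _).trans hux)
    grw [norm_glReaction_sub_le hq β hux hvx, norm_sub_le_of_le hux hvx]
  · refine ((hu.hasDerivWithinAt x hs).sub (hv.hasDerivWithinAt x hs)).congr_deriv ?_
    have hΔ : Δ (fun y ↦ u y s - v y s) x = Δ (fun y ↦ u y s) x - Δ (fun y ↦ v y s) x :=
      (hBu s hs).contDiff.contDiffAt.laplacian_sub (hBv s hs).contDiff.contDiffAt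
    rw [hΔ]
    ring

lemma half_lt_norm_sub_of_not_inCube {L ℓ : ℝ} {x y : EuclideanSpace ℝ (Fin d)}
    (hx : inCube d (L - ℓ) x) (hy : ¬ inCube d L y) : ℓ / 2 < ‖y - x‖ := by
  obtain ⟨j, hj⟩ := not_forall.mp hy
  have habs : |y j| ≤ |y j - x j| + |x j| := by simpa using abs_add_le (y j - x j) (x j)
  have hnorm : |y j - x j| ≤ ‖y - x‖ := PiLp.norm_apply_le (y - x) j
  linarith [hx j]

lemma norm_le_mul_exp_of_inCube {f : EuclideanSpace ℝ (Fin d) → ℂ} {ε B L ℓ : ℝ} (hε : 0 < ε)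
    (hℓ : 2 * Real.log (1 / ε) ≤ ℓ) (hB : ∀ y, ‖f y‖ ≤ B) (hf : ∀ y, inCube d L y → ‖f y‖ ≤ ε)
    {x : EuclideanSpace ℝ (Fin d)} (hx : inCube d (L - ℓ) x) (y : EuclideanSpace ℝ (Fin d)) :
    ‖f y‖ ≤ (1 + B) * ε * Real.exp ‖y - x‖ := by
  have hB0 : 0 ≤ B := (norm_nonneg _).trans (hB y)
  by_cases hy : inCube d L y
  · calc ‖f y‖ ≤ 1 * ε * 1 := by simpa using hf y hy
      _ ≤ (1 + B) * ε * Real.exp ‖y - x‖ := by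
        gcongr
        · exact le_add_of_nonneg_right hB0
        · exact Real.one_le_exp (norm_nonneg _)
  · have hfar : 1 / ε ≤ Real.exp ‖y - x‖ := by
      rw [← Real.log_le_iff_le_exp (by positivity)]
      linarith [half_lt_norm_sub_of_not_inCube hx hy]
    calc ‖f y‖ ≤ B * (ε * (1 / ε)) := by simpa [hε.ne'] using hB y
      _ ≤ (1 + B) * (ε * Real.exp ‖y - x‖) := by
        gcongr
        exact le_add_of_nonneg_left zero_le_one
      _ = (1 + B) * ε * Real.exp ‖y - x‖ := (mul_assoc _ _ _).symm

lemma two_mul_log_one_div_le {C ε : ℝ} (hC : 2 ≤ C) (ht : 0 ≤ t) (hε : 0 < ε) (hε1 : ε ≤ 1) :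
    2 * Real.log (1 / ε) ≤ C * (1 + t) * Real.log (1 / ε) := by
  have hlog : 0 ≤ Real.log (1 / ε) := Real.log_nonneg (one_le_one_div hε hε1)
  gcongr
  exact hC.trans (le_mul_of_one_le_right (by linarith) (by linarith))

end GinzburgLandau

theorem localized_divergence_general (d : ℕ) {q : ℝ} (hq : 0 ≤ q) (α β : ℝ) {M : ℝ} (hM : 0 ≤ M) :
    ∃ C γ : ℝ, 2 ≤ C ∧ ∀ ε : ℝ, 0 < ε → ∀ t : ℝ, 0 ≤ t →
      ∀ L ℓ : ℝ, 2 * Real.log (1 / ε) ≤ ℓ →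
      ∀ g u v : EuclideanSpace ℝ (Fin d) → ℝ → ℂ,
      IsGLSolution d q α β (Set.Icc 0 t) g u →
      IsGLSolution d q α β (Set.Icc 0 t) g v →
      (∀ x, ∀ s ∈ Set.Icc (0 : ℝ) t, ‖u x s‖ ≤ M ∧ ‖v x s‖ ≤ M) →
      (∀ x, inCube d L x → ‖u x 0 - v x 0‖ ≤ ε) →
      ∀ x, inCube d (L - ℓ) x → ‖u x t - v x t‖ ≤ C * Real.exp (γ * t) * ε := by
  have hκ : 0 < (1 + I * (α : ℂ)).re := by simp
  refine ⟨2 * heatMass (1 + I * (α : ℂ)) d * (1 + (M + M)),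
    growthRate (1 + I * (α : ℂ)) d (glLipschitz q β M), ?_, ?_⟩
  · nlinarith [one_le_heatMass hκ d]
  · intro ε hε t ht L ℓ hℓ g u v hu hv hbound hinit x hx
    have h0 : (0 : ℝ) ∈ Set.Icc 0 t := ⟨le_rfl, ht⟩
    obtain ⟨B, N, hw⟩ := hu.exists_isBoundedHeatSolution_sub hq hv hbound
    have hlocal := hw.norm_apply_le hκ ht (glLipschitz_pos hq β hM)
      (fun s hs y ↦ norm_glReaction_sub_le hq β (hbound y s hs).1 (hbound y s hs).2)
      (norm_le_mul_exp_of_inCube hε hℓ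
        (fun y ↦ norm_sub_le_of_le (hbound y 0 h0).1 (hbound y 0 h0).2) hinit hx)
    rw [finrank_euclideanSpace_fin] at hlocal
    exact hlocal.trans_eq (by ring)

/-- Localised exponential divergence estimate (Lemma 5.4 of the paper): there are
constants `C, γ` such that for all sufficiently small `ε > 0`, if two bounded classical
solutions (bounded by `M`) with the same forcing satisfy
`sup_{Q_L} |u(0) − v(0)| ≤ ε`, then `sup_{Q_{L'}} |u(t) − v(t)| ≤ C e^{γt} ε`,
where `L' = L − C(1+t) log(1/ε)`. -/
theorem localized_divergence (d : ℕ) (hd1 : 1 ≤ d) (hd2 : d ≤ 2)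
    (q : ℝ) (hq : 1 / 2 < q) (α β : ℝ) (hβ : |β| ≤ Real.sqrt (2 * q + 1) / q)
    (M : ℝ) (hM : 0 < M) :
    ∃ C γ : ℝ, ∃ ε₀ : ℝ, 0 < ε₀ ∧ ∀ ε : ℝ, 0 < ε → ε ≤ ε₀ →
      ∀ t : ℝ, 0 < t → ∀ L : ℝ, 0 < L →
      0 < L - C * (1 + t) * Real.log (1 / ε) →
      ∀ g u v : EuclideanSpace ℝ (Fin d) → ℝ → ℂ,
      (∃ Mg : ℝ, ∀ x s, ‖g x s‖ ≤ Mg) →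
      ContinuousOn (fun p : EuclideanSpace ℝ (Fin d) × ℝ => g p.1 p.2)
        (Set.univ ×ˢ Set.Icc 0 t) →
      IsGLSolution d q α β (Set.Icc 0 t) g u →
      IsGLSolution d q α β (Set.Icc 0 t) g v →
      (∀ x, ∀ s ∈ Set.Icc (0 : ℝ) t, ‖u x s‖ ≤ M ∧ ‖v x s‖ ≤ M) →
      (∀ x, inCube d L x → ‖u x 0 - v x 0‖ ≤ ε) →
      ∀ x, inCube d (L - C * (1 + t) * Real.log (1 / ε)) x →
        ‖u x t - v x t‖ ≤ C * Real.exp (γ * t) * ε := by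
  obtain ⟨C, γ, hC, hdiv⟩ := localized_divergence_general d (by linarith : 0 ≤ q) α β hM.le
  exact ⟨C, γ, 1, one_pos, fun ε hε hε1 t ht L _ _ g u v _ _ ↦
    hdiv ε hε t ht.le L _ (two_mul_log_one_div_le hC ht.le hε hε1) g u v⟩
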